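/- arXiv:2407.14835 — 5 statements merged into one kernel-verified Lean document; each statement's English description precedes it below -/
import Mathlib

section
/- Let P be a nonconstant polynomial over ℂ and define f(z) = e^z + P(z). Then for every unbounded curve γ, i.e., every continuous map γ : [0,∞) → ℂ whose image is unbounded, the image of f ∘ γ is unbounded. -/
/-!
Suppose `f = exp + P` is bounded along the curve. At points `z` of the curve with `‖z‖ → ∞` the
terms `exp z` and `P z` almost cancel, so `exp z / P z → -1`. As `‖P z‖` is comparable to `‖z‖ ^ d`
with `d = deg P`, this forces `0 ≤ Re z = O(log ‖z‖)`. Hence `|Im z| / ‖z‖ → 1`, so `Im` is unbounded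
along the curve, say above or below according to a sign `s`.

By the intermediate value theorem the curve then meets every far enough horizontal line on the
side `s`. On such lines `z / ‖z‖ → s * I`, so `P z ~ a * (s * I) ^ d * ‖z‖ ^ d`, where `a` is the
leading coefficient. On the lines where `exp (I * Im z)` is the direction of `a * (s * I) ^ d`, the
quotient `exp z / P z` is asymptotically a positive real number, which contradicts the limit `-1`.
-/

open Filter Topology

/-- A polynomial divided by its top power tends to its leading coefficient at infinity, because
the quotient is the reversed polynomial evaluated at `z⁻¹`. -/
lemma tendsto_eval_div_pow (P : Polynomial ℂ) (u : ℕ → ℂ)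
    (hu : Tendsto (fun n => ‖u n‖) atTop atTop) :
    Tendsto (fun n => P.eval (u n) / u n ^ P.natDegree) atTop (𝓝 P.leadingCoeff) := by
  have h1 : Tendsto (fun n => (u n)⁻¹) atTop (𝓝 0) :=
    tendsto_inv₀_cobounded.comp (tendsto_norm_atTop_iff_cobounded.1 hu)
  have h2 := (P.reverse.continuous.tendsto 0).comp h1
  rw [← Polynomial.coeff_zero_eq_eval_zero, Polynomial.coeff_zero_reverse] at h2
  refine h2.congr' ?_
  filter_upwards [hu.eventually_gt_atTop 0] with n hn
  have h0 : u n ≠ 0 := norm_pos_iff.1 hn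
  let _ := invertibleOfNonzero h0
  have h3 := Polynomial.eval₂_reverse_mul_pow (RingHom.id ℂ) (u n) P
  rw [invOf_eq_inv] at h3
  rw [eq_div_iff (pow_ne_zero _ h0)]
  exact h3

lemma tendsto_exp_div_eval (P : Polynomial ℂ) (hP : 1 ≤ P.natDegree) (M : ℝ) (u : ℕ → ℂ)
    (hu : Tendsto (fun n => ‖u n‖) atTop atTop)
    (hM : ∀ n, ‖Complex.exp (u n) + P.eval (u n)‖ ≤ M) :
    Tendsto (fun n => Complex.exp (u n) / P.eval (u n)) atTop (𝓝 (-1)) := by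
  have hPn : Tendsto (fun n => ‖P.eval (u n)‖) atTop atTop :=
    P.tendsto_norm_atTop (Polynomial.natDegree_pos_iff_degree_pos.1 hP) hu
  have h1 : Tendsto (fun n => (Complex.exp (u n) + P.eval (u n)) / P.eval (u n)) atTop (𝓝 0) := by
    refine squeeze_zero_norm (a := fun n => M / ‖P.eval (u n)‖) (fun n => ?_)
      (hPn.const_div_atTop M)
    rw [norm_div]
    gcongr
    exact hM n
  have h2 := h1.sub_const 1
  rw [zero_sub] at h2
  refine h2.congr' ?_
  filter_upwards [hPn.eventually_gt_atTop 0] with n hn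
  have h0 : P.eval (u n) ≠ 0 := norm_pos_iff.1 hn
  field_simp
  ring

/-- Where `exp + P` stays bounded, the real part is negligible: it is nonnegative since
`‖exp z‖` is large, and `O(log ‖z‖)` since `‖exp z‖ = O(‖z‖ ^ d)`. -/
lemma tendsto_re_div_norm (P : Polynomial ℂ) (hP : 1 ≤ P.natDegree) (M : ℝ) (u : ℕ → ℂ)
    (hu : Tendsto (fun n => ‖u n‖) atTop atTop)
    (hM : ∀ n, ‖Complex.exp (u n) + P.eval (u n)‖ ≤ M) :
    Tendsto (fun n => (u n).re / ‖u n‖) atTop (𝓝 0) := by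
  have ha : P.leadingCoeff ≠ 0 := by
    rw [Polynomial.leadingCoeff_ne_zero]
    rintro rfl
    simp at hP
  have hPn : Tendsto (fun n => ‖P.eval (u n)‖) atTop atTop :=
    P.tendsto_norm_atTop (Polynomial.natDegree_pos_iff_degree_pos.1 hP) hu
  have hq := ((tendsto_exp_div_eval P hP M u hu hM).mul (tendsto_eval_div_pow P u hu)).norm
  rw [norm_mul, norm_neg, norm_one, one_mul] at hq
  have hup := hq.eventually_lt_const (lt_add_one ‖P.leadingCoeff‖)
  set C := ‖P.leadingCoeff‖ + 1 with hC
  have hCpos : 0 < C := by positivity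
  have hlim : Tendsto (fun n => Real.log C / ‖u n‖ + P.natDegree * (Real.log ‖u n‖ / ‖u n‖))
      atTop (𝓝 0) := by
    have hlog : Tendsto (fun x : ℝ => Real.log x / x) atTop (𝓝 0) :=
      Real.isLittleO_log_id_atTop.tendsto_div_nhds_zero
    have := (hu.const_div_atTop (Real.log C)).add ((hlog.comp hu).const_mul (P.natDegree : ℝ))
    simpa using this
  refine squeeze_zero' ?_ ?_ hlim
  · filter_upwards [hPn.eventually_ge_atTop (M + 1)] with n hn
    have h1 : ‖P.eval (u n)‖ ≤ ‖Complex.exp (u n) + P.eval (u n)‖ + ‖Complex.exp (u n)‖ := by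
      simpa using norm_sub_le (Complex.exp (u n) + P.eval (u n)) (Complex.exp (u n))
    have h2 : 1 ≤ Real.exp (u n).re := by
      rw [← Complex.norm_exp]
      linarith [hM n]
    have h3 : 0 ≤ (u n).re := Real.one_le_exp_iff.1 h2
    positivity
  · filter_upwards [hup, hPn.eventually_gt_atTop 0, hu.eventually_gt_atTop 0] with n h1 h2 h3
    have hP0 : P.eval (u n) ≠ 0 := norm_pos_iff.1 h2
    rw [div_mul_div_cancel₀ hP0, norm_div, norm_pow, Complex.norm_exp,
      div_lt_iff₀ (by positivity)] at h1
    have h4 : (u n).re ≤ Real.log C + P.natDegree * Real.log ‖u n‖ := by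
      rw [← Real.log_pow, ← Real.log_mul hCpos.ne' (by positivity)]
      exact (Real.le_log_iff_exp_le (by positivity)).2 h1.le
    calc (u n).re / ‖u n‖ ≤ (Real.log C + P.natDegree * Real.log ‖u n‖) / ‖u n‖ := by gcongr
      _ = _ := by ring

lemma tendsto_abs_im_div_norm (u : ℕ → ℂ) (hu : Tendsto (fun n => ‖u n‖) atTop atTop)
    (hre : Tendsto (fun n => (u n).re / ‖u n‖) atTop (𝓝 0)) :
    Tendsto (fun n => |(u n).im| / ‖u n‖) atTop (𝓝 1) := by
  have h1 := ((hre.pow 2).const_sub 1).sqrt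
  norm_num at h1
  refine h1.congr' ?_
  filter_upwards [hu.eventually_gt_atTop 0] with n hn
  rw [← Real.sqrt_sq (by positivity : 0 ≤ |(u n).im| / ‖u n‖)]
  congr 1
  have h2 := Complex.sq_norm (u n)
  rw [Complex.normSq_apply] at h2
  rw [div_pow, div_pow, sq_abs]
  field_simp
  linarith

/-- On the lines where `exp (I * Im z)` is the direction of `a * (s * I) ^ d`, the function
`exp + P` cannot stay bounded: there `exp z / P z` is asymptotically positive. -/
lemma not_bounded_on_lines (P : Polynomial ℂ) (hP : 1 ≤ P.natDegree) (M : ℝ) (u : ℕ → ℂ)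
    (hu : Tendsto (fun n => ‖u n‖) atTop atTop)
    (hM : ∀ n, ‖Complex.exp (u n) + P.eval (u n)‖ ≤ M)
    (s : ℝ) (hs : s ≠ 0) (hsim : ∀ n, (u n).im = s * |(u n).im|)
    (hdir : ∀ n, ‖P.leadingCoeff‖ * Complex.exp ((u n).im * Complex.I) =
      P.leadingCoeff * (s * Complex.I) ^ P.natDegree) : False := by
  have ha : P.leadingCoeff ≠ 0 := by
    rw [Polynomial.leadingCoeff_ne_zero]
    rintro rfl
    simp at hP
  have hre := tendsto_re_div_norm P hP M u hu hM
  have him := tendsto_abs_im_div_norm u hu hre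
  have hd : Tendsto (fun n => u n / (‖u n‖ : ℂ)) atTop (𝓝 (s * Complex.I)) := by
    have h1 := ((Complex.continuous_ofReal.tendsto _).comp hre).add
      (((Complex.continuous_ofReal.tendsto _).comp (him.const_mul s)).mul_const Complex.I)
    simp only [Complex.ofReal_zero, zero_add, mul_one] at h1
    refine h1.congr fun n => ?_
    simp only [Function.comp]
    rw [← mul_div_assoc, ← hsim n]
    conv_rhs => arg 1; rw [← Complex.re_add_im (u n)]
    push_cast
    ring
  have hq := ((tendsto_exp_div_eval P hP M u hu hM).mul (tendsto_eval_div_pow P u hu)).mul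
    (hd.pow P.natDegree)
  set w : ℂ := P.leadingCoeff * (s * Complex.I) ^ P.natDegree with hw
  have hw0 : w ≠ 0 := mul_ne_zero ha (pow_ne_zero _ (by simp [hs]))
  have hPn : Tendsto (fun n => ‖P.eval (u n)‖) atTop atTop :=
    P.tendsto_norm_atTop (Polynomial.natDegree_pos_iff_degree_pos.1 hP) hu
  -- By `hdir`, `exp z / (w * ‖z‖ ^ d)` is the positive real `exp (Re z) / (‖a‖ * ‖z‖ ^ d)`.
  have hr : Tendsto (fun n => ((Real.exp (u n).re / (‖P.leadingCoeff‖ * ‖u n‖ ^ P.natDegree) : ℝ) :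
      ℂ)) atTop (𝓝 (-1)) := by
    have h2 := hq.div_const w
    have h3 : -1 * P.leadingCoeff * (s * Complex.I) ^ P.natDegree / w = -1 := by
      rw [div_eq_iff hw0, hw]
      ring
    rw [h3] at h2
    refine h2.congr' ?_
    filter_upwards [hPn.eventually_gt_atTop 0, hu.eventually_gt_atTop 0] with n h4 h5
    have hP0 : P.eval (u n) ≠ 0 := norm_pos_iff.1 h4
    have hu0 : u n ≠ 0 := norm_pos_iff.1 h5
    have hnu : (‖u n‖ : ℂ) ≠ 0 := by exact_mod_cast h5.ne'
    have hna : (‖P.leadingCoeff‖ : ℂ) ≠ 0 := by exact_mod_cast (norm_pos_iff.2 ha).ne'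
    have hE : Complex.exp (u n) = Complex.exp ((u n).re) * Complex.exp ((u n).im * Complex.I) := by
      rw [← Complex.exp_add, Complex.re_add_im]
    rw [div_mul_div_cancel₀ hP0, div_pow, div_mul_div_cancel₀ (pow_ne_zero _ hu0), hE, ← hdir n]
    push_cast
    have := Complex.exp_ne_zero ((u n).im * Complex.I)
    field_simp
  have hr' := (Complex.continuous_re.tendsto _).comp hr
  have h6 : (0 : ℝ) ≤ (-1 : ℂ).re := by
    refine ge_of_tendsto' hr' fun n => ?_
    simp only [Function.comp, Complex.ofReal_re]
    positivity
  norm_num at h6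

/-- A curve on which `exp + P` is bounded is bounded in each vertical direction `s = ±1`: otherwise
it would meet infinitely many of the lines of `not_bounded_on_lines`. -/
lemma bddAbove_im (P : Polynomial ℂ) (hP : 1 ≤ P.natDegree) (M : ℝ)
    (γ : ℝ → ℂ) (hγ : ContinuousOn γ (Set.Ici 0))
    (hM : ∀ t ∈ Set.Ici (0 : ℝ), ‖Complex.exp (γ t) + P.eval (γ t)‖ ≤ M)
    (s : ℝ) (hs : s * s = 1) :
    BddAbove ((fun t => s * (γ t).im) '' Set.Ici 0) := by
  by_contra hb
  have hs0 : s ≠ 0 := by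
    rintro rfl
    norm_num at hs
  have hsabs : |s| = 1 := by
    rw [← Real.sqrt_mul_self_eq_abs, hs, Real.sqrt_one]
  set w : ℂ := P.leadingCoeff * (s * Complex.I) ^ P.natDegree with hw
  have hnw : ‖w‖ = ‖P.leadingCoeff‖ := by
    simp [hw, hsabs]
  have hpre : ((fun t => s * (γ t).im) '' Set.Ici 0).OrdConnected :=
    (isPreconnected_Ici.image _
      (continuousOn_const.mul (Complex.continuous_im.comp_continuousOn hγ))).ordConnected
  -- Heights on the side `s` of the lines on which `exp` has the argument of `w`.
  let y : ℕ → ℝ := fun n => s * w.arg + n * (2 * Real.pi)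
  have hy : Tendsto y atTop atTop :=
    tendsto_atTop_add_const_left _ _
      (tendsto_natCast_atTop_atTop.atTop_mul_const (by positivity))
  obtain ⟨N, hN⟩ := eventually_atTop.1 ((hy.eventually_ge_atTop (s * (γ 0).im)).and
    (hy.eventually_ge_atTop 0))
  have hex : ∀ n : ℕ, ∃ t ∈ Set.Ici (0 : ℝ), s * (γ t).im = y (n + N) := by
    intro n
    obtain ⟨b, hbm, hb⟩ := not_bddAbove_iff.1 hb (y (n + N))
    exact hpre.out ⟨0, Set.self_mem_Ici, rfl⟩ hbm ⟨(hN _ (Nat.le_add_left _ _)).1, hb.le⟩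
  choose t ht hty using hex
  have him : ∀ n, (γ (t n)).im = s * y (n + N) := fun n => by
    rw [← hty, ← mul_assoc, hs, one_mul]
  have habs : ∀ n, |(γ (t n)).im| = y (n + N) := fun n => by
    rw [him, abs_mul, hsabs, one_mul, abs_of_nonneg (hN _ (Nat.le_add_left _ _)).2]
  refine not_bounded_on_lines P hP M (fun n => γ (t n)) ?_ (fun n => hM _ (ht n)) s hs0 ?_ ?_
  · refine tendsto_atTop_mono (fun n => ?_) (hy.comp (tendsto_add_atTop_nat N))
    have := Complex.abs_im_le_norm (γ (t n))
    rwa [habs] at this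
  · intro n
    rw [habs, him]
  · intro n
    rw [← hw, ← hnw, him]
    conv_rhs => rw [← Complex.norm_mul_exp_arg_mul_I w]
    congr 1
    rw [Complex.exp_eq_exp_iff_exists_int]
    have hsc : (s : ℂ) * s = 1 := by exact_mod_cast hs
    rcases mul_self_eq_one_iff.1 hs with h | h
    · refine ⟨(n + N : ℕ), ?_⟩
      simp only [y, h]
      push_cast
      ring
    · refine ⟨-(n + N : ℕ), ?_⟩
      simp only [y, h]
      push_cast
      ring

/-- For a nonconstant polynomial `P` over `ℂ` and `f z = e^z + P z`, the image of
every unbounded curve `γ : [0,∞) → ℂ` under `f` is unbounded. -/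
theorem exp_add_poly_unbounded_on_unbounded_curve
    (P : Polynomial ℂ) (hP : 1 ≤ P.natDegree)
    (f : ℂ → ℂ) (hf : ∀ z, f z = Complex.exp z + P.eval z)
    (γ : ℝ → ℂ) (hγ : ContinuousOn γ (Set.Ici 0))
    (hub : ¬ Bornology.IsBounded (γ '' Set.Ici 0)) :
    ¬ Bornology.IsBounded ((f ∘ γ) '' Set.Ici 0) := by
  intro hbd
  obtain ⟨M, hM⟩ := isBounded_iff_forall_norm_le.1 hbd
  have hM' : ∀ t ∈ Set.Ici (0 : ℝ), ‖Complex.exp (γ t) + P.eval (γ t)‖ ≤ M := fun t ht => by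
    rw [← hf]
    exact hM _ ⟨t, ht, rfl⟩
  obtain ⟨A, hA⟩ := bddAbove_im P hP M γ hγ hM' 1 (by norm_num)
  obtain ⟨B, hB⟩ := bddAbove_im P hP M γ hγ hM' (-1) (by norm_num)
  have him : ∀ t ∈ Set.Ici (0 : ℝ), |(γ t).im| ≤ max A B := fun t ht => by
    have h1 := hA ⟨t, ht, rfl⟩
    have h2 := hB ⟨t, ht, rfl⟩
    simp only [one_mul, neg_mul] at h1 h2
    exact abs_le'.2 ⟨h1.trans (le_max_left _ _), h2.trans (le_max_right _ _)⟩
  have hex : ∀ n : ℕ, ∃ t ∈ Set.Ici (0 : ℝ), (n : ℝ) ≤ ‖γ t‖ := by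
    intro n
    by_contra! h
    refine hub (isBounded_iff_forall_norm_le.2 ⟨n, ?_⟩)
    rintro _ ⟨t, ht, rfl⟩
    exact (h t ht).le
  choose t ht htn using hex
  have hu : Tendsto (fun n => ‖γ (t n)‖) atTop atTop :=
    tendsto_atTop_mono htn tendsto_natCast_atTop_atTop
  have h1 := tendsto_abs_im_div_norm _ hu
    (tendsto_re_div_norm P hP M _ hu fun n => hM' _ (ht n))
  have h0 : Tendsto (fun n => |(γ (t n)).im| / ‖γ (t n)‖) atTop (𝓝 0) := by
    refine squeeze_zero (fun n => by positivity) (fun n => ?_) (hu.const_div_atTop (max A B))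
    gcongr
    exact him _ (ht n)
  exact zero_ne_one (tendsto_nhds_unique h0 h1)
end

section
/- Let k ≥ 2 be a natural number, let E^k denote the k-fold iterate of the complex exponential z ↦ e^z, and let P be a nonconstant polynomial over ℂ. Define f(z) = E^k(z) + P(z). Then for every unbounded curve γ, i.e., every continuous map γ : [0,∞) → ℂ whose image is unbounded, the image of f ∘ γ is unbounded. -/
/-!
Write `E = exp`, `d = deg P`, `a` for the leading coefficient of `P`, and suppose
`‖E^k z + P z‖ ≤ M` along an unbounded curve. For large `R` and arbitrarily large `N` the curve
contains an arc `S` lying in `‖z‖ ≥ R` that starts on `‖z‖ ≤ R` and reaches `‖z‖ ≥ N`.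

On `S` we have `E^k z = -a z^d (1 + δ)` with `‖δ‖ ≤ 1/2`, so `‖E^k z‖` is large and hence
`Re (E^j z) > 0` for every `j < k` (`re_iterate_exp_pos`). If `Re (exp g) > 0` on a connected set,
then `Im g` varies by less than `π` there (`abs_im_sub_lt_pi`). Applied to `g = E^j`, `j ≤ k - 2`,
and to `g = E^(k-1) - d log z - log (-a)`, this bounds `Im (E^j z)` on `S` for all `j ≤ k - 1`, by a
constant `C` that depends on `R` but not on `N`. Therefore every `E^j z` is within `C` of its
positive real part, which forces
`Re (E^(k-1) z) ≥ exp (Re z) - C` with `Re z ≥ ‖z‖ - C` (`exp_re_le_re_iterate`). On the other hand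
`Re (E^(k-1) z) = log ‖E^k z‖ ≤ log (2 ‖a‖ ‖z‖^d)`, which is impossible once `‖z‖` is large. So `N`
is bounded, a contradiction (`exists_norm_bound`).
-/

/-- Far from the origin, the bound `‖w + P z‖ ≤ M` makes `w` comparable to the leading term
`-a z ^ d`. -/
lemma poly_approx (P : Polynomial ℂ) (hP : 1 ≤ P.natDegree) (M K : ℝ) :
    ∃ R : ℝ, 1 ≤ R ∧ ∀ z : ℂ, R ≤ ‖z‖ → ∀ w : ℂ, ‖w + P.eval z‖ ≤ M →
      ‖w + P.leadingCoeff * z ^ P.natDegree‖ ≤ ‖P.leadingCoeff‖ * ‖z‖ ^ P.natDegree / 2 ∧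
      K ≤ ‖P.leadingCoeff‖ * ‖z‖ ^ P.natDegree / 2 := by
  set a := P.leadingCoeff with ha
  set d := P.natDegree with hd
  have ha0 : 0 < ‖a‖ := by
    rw [norm_pos_iff, ha]
    intro h
    rw [Polynomial.leadingCoeff_eq_zero] at h
    simp [hd, h] at hP
  set B : ℝ := ∑ i ∈ Finset.range d, ‖P.coeff i‖ with hB
  have hB0 : 0 ≤ B := Finset.sum_nonneg fun _ _ => norm_nonneg _
  set L : ℝ := 2 * (B + |M| + |K|) / ‖a‖ with hL
  have hL0 : 0 ≤ L := by positivity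
  refine ⟨1 + L, by linarith, fun z hz w hw => ?_⟩
  have hz1 : 1 ≤ ‖z‖ := by linarith
  have hp1 : 1 ≤ ‖z‖ ^ (d - 1) := one_le_pow₀ hz1
  have hpd : ‖z‖ ^ d = ‖z‖ ^ (d - 1) * ‖z‖ := by
    rw [← pow_succ]; congr 1; omega
  have hLa : L * ‖a‖ = 2 * (B + |M| + |K|) := by
    rw [hL]; field_simp
  have hmain : (B + |M| + |K|) * ‖z‖ ^ (d - 1) ≤ ‖a‖ * ‖z‖ ^ d / 2 := by
    have h1 : 2 * (B + |M| + |K|) ≤ ‖a‖ * ‖z‖ := by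
      rw [← hLa, mul_comm]
      exact mul_le_mul_of_nonneg_left (by linarith) ha0.le
    have h2 := mul_le_mul_of_nonneg_right h1 (by linarith : (0:ℝ) ≤ ‖z‖ ^ (d - 1))
    rw [hpd]
    nlinarith
  have hsum : P.eval z = (∑ i ∈ Finset.range d, P.coeff i * z ^ i) + a * z ^ d := by
    rw [Polynomial.eval_eq_sum_range, Finset.sum_range_succ]
    rfl
  have hlow : ‖∑ i ∈ Finset.range d, P.coeff i * z ^ i‖ ≤ B * ‖z‖ ^ (d - 1) := by
    rw [hB, Finset.sum_mul]
    refine (norm_sum_le _ _).trans (Finset.sum_le_sum fun i hi => ?_)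
    rw [norm_mul, norm_pow]
    have : i ≤ d - 1 := by have := Finset.mem_range.1 hi; omega
    gcongr
  have hM := le_abs_self M
  have hK := le_abs_self K
  have hM0 := abs_nonneg M
  have hK0 := abs_nonneg K
  constructor
  · have : w + a * z ^ d = (w + P.eval z) - ∑ i ∈ Finset.range d, P.coeff i * z ^ i := by
      rw [hsum]; ring
    rw [this]
    refine (norm_sub_le _ _).trans ?_
    nlinarith
  · nlinarith

/-- On a preconnected set where `exp ∘ g` stays in the right half-plane, `g` stays in one of the
horizontal strips of width `π` that make up `{Re (exp ·) > 0}`. -/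
lemma abs_im_sub_lt_pi {S : Set ℂ} (hS : IsPreconnected S) {g : ℂ → ℂ} (hg : ContinuousOn g S)
    (hre : ∀ z ∈ S, 0 < (Complex.exp (g z)).re) {x y : ℂ} (hx : x ∈ S) (hy : y ∈ S) :
    |(g x).im - (g y).im| < Real.pi := by
  have hpre : IsPreconnected ((fun z => (g z).im) '' S) :=
    hS.image _ (Complex.continuous_im.comp_continuousOn hg)
  have hoc := hpre.ordConnected
  have key : ∀ u ∈ S, ∀ v ∈ S, (g u).im - (g v).im < Real.pi := by
    intro u hu v hv
    by_contra! h
    -- an interval of length at least `π` contains a zero `π / 2 + n π` of the cosine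
    set n : ℤ := ⌈((g v).im - Real.pi / 2) / Real.pi⌉ with hn
    have h1 : ((g v).im - Real.pi / 2) ≤ n * Real.pi := by
      rw [← div_le_iff₀ Real.pi_pos]; exact Int.le_ceil _
    have h2 : n * Real.pi < ((g v).im - Real.pi / 2) + Real.pi := by
      have := Int.ceil_lt_add_one (((g v).im - Real.pi / 2) / Real.pi)
      rw [← hn] at this
      have h3 := mul_lt_mul_of_pos_right this Real.pi_pos
      rw [add_mul, div_mul_cancel₀ _ Real.pi_ne_zero] at h3
      linarith
    obtain ⟨z, hz, hzn⟩ := hoc.out ⟨v, hv, rfl⟩ ⟨u, hu, rfl⟩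
      (⟨by linarith, by linarith⟩ :
        Real.pi / 2 + n * Real.pi ∈ Set.Icc (g v).im (g u).im)
    have := hre z hz
    simp only at hzn
    rw [Complex.exp_re, hzn] at this
    have hc : Real.cos (Real.pi / 2 + n * Real.pi) = 0 := by
      rw [Real.cos_eq_zero_iff]
      exact ⟨n, by ring⟩
    rw [hc] at this
    simp at this
  rw [abs_lt]
  constructor
  · linarith [key y hy x hx]
  · exact key x hx y hy

lemma iterate_exp_pos (n : ℕ) : 0 < Real.exp^[n] 1 := by
  cases n with
  | zero => simp
  | succ n => rw [Function.iterate_succ_apply']; exact Real.exp_pos _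

lemma norm_iterate_succ (n : ℕ) (z : ℂ) :
    ‖Complex.exp^[n + 1] z‖ = Real.exp (Complex.exp^[n] z).re := by
  rw [Function.iterate_succ_apply', Complex.norm_exp]

/-- A large value of `‖E^n z‖` forces all earlier iterates into the right half-plane, because
`Re (E^j z) = log ‖E^(j+1) z‖`. -/
lemma re_iterate_exp_pos (z : ℂ) (n : ℕ) : Real.exp^[n] 1 ≤ ‖Complex.exp^[n] z‖ →
    ∀ j < n, 0 < (Complex.exp^[j] z).re := by
  induction n with
  | zero => intro _ j hj; omega
  | succ n ih =>
    intro h j hj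
    rw [norm_iterate_succ, Function.iterate_succ_apply', Real.exp_le_exp] at h
    rcases Nat.lt_succ_iff_lt_or_eq.1 hj with hj | rfl
    · exact ih (h.trans (Complex.re_le_norm _)) j hj
    · exact (iterate_exp_pos _).trans_le h

lemma norm_iterate_exp_le (z : ℂ) {R : ℝ} (hz : ‖z‖ ≤ R) (j n : ℕ) (hj : j ≤ n) :
    ‖Complex.exp^[j] z‖ ≤ Real.exp^[n] R := by
  have h1 : ‖Complex.exp^[j] z‖ ≤ Real.exp^[j] R := by
    clear hj
    induction j with
    | zero => simpa using hz
    | succ j ih =>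
      rw [norm_iterate_succ, Function.iterate_succ_apply', Real.exp_le_exp]
      exact (Complex.re_le_norm _).trans ih
  refine h1.trans ?_
  induction n, hj using Nat.le_induction with
  | base => exact le_rfl
  | succ n _ ih =>
    rw [Function.iterate_succ_apply']
    linarith [Real.add_one_le_exp (Real.exp^[n] R)]

/-- If the iterates `E^j z`, `j ≤ m + 1`, lie in the half-strip `Re > 0`, `|Im| ≤ C`, then their
real parts grow, and the last one is at least `exp (Re z) - C`. -/
lemma exp_re_le_re_iterate (z : ℂ) (m : ℕ) (C : ℝ) (hC : 2 ≤ C) (hz : C ≤ z.re)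
    (hpos : ∀ j ≤ m + 1, 0 < (Complex.exp^[j] z).re)
    (him : ∀ j ≤ m + 1, |(Complex.exp^[j] z).im| ≤ C) :
    Real.exp z.re - C ≤ (Complex.exp^[m + 1] z).re := by
  have step : ∀ j ≤ m, Real.exp (Complex.exp^[j] z).re - C ≤ (Complex.exp^[j + 1] z).re := by
    intro j hj
    rw [← norm_iterate_succ]
    have h1 := Complex.norm_le_abs_re_add_abs_im (Complex.exp^[j + 1] z)
    rw [abs_of_pos (hpos (j + 1) (by omega))] at h1
    linarith [him (j + 1) (by omega)]
  have mono : ∀ j ≤ m, z.re ≤ (Complex.exp^[j] z).re := by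
    intro j
    induction j with
    | zero => intro _; simp
    | succ j ih =>
      intro hj
      have h1 := ih (by omega)
      have h2 := step j (by omega)
      have h3 := Real.quadratic_le_exp_of_nonneg (hpos j (by omega)).le
      nlinarith
  have h := Real.exp_le_exp.2 (mono m le_rfl)
  linarith [step m le_rfl]

/-- Passing to the part of a curve after its last visit to the disc of radius `R`. -/
lemma exists_last_visit (γ : ℝ → ℂ) (hγ : ContinuousOn γ (Set.Ici 0)) (R t : ℝ) (ht : 0 ≤ t)
    (h0 : ‖γ 0‖ ≤ R) (hR : R ≤ ‖γ t‖) :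
    ∃ s ∈ Set.Icc 0 t, ‖γ s‖ ≤ R ∧ ∀ u ∈ Set.Icc s t, R ≤ ‖γ u‖ := by
  have hcont : ContinuousOn (fun u => ‖γ u‖) (Set.Icc 0 t) :=
    (hγ.mono fun u hu => hu.1).norm
  have hcomp : IsCompact (Set.Icc 0 t ∩ (fun u => ‖γ u‖) ⁻¹' Set.Iic R) :=
    isCompact_Icc.of_isClosed_subset
      (hcont.preimage_isClosed_of_isClosed isClosed_Icc isClosed_Iic) Set.inter_subset_left
  obtain ⟨s, ⟨hs, hsR⟩, hmax⟩ := hcomp.exists_isGreatest ⟨0, ⟨le_rfl, ht⟩, h0⟩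
  have hsR' : ‖γ s‖ ≤ R := hsR
  refine ⟨s, hs, hsR', fun u hu => ?_⟩
  by_contra! hlt
  -- otherwise `‖γ‖` takes the value `R` after `u`, hence `u` itself is already after `s`
  obtain ⟨v, hv, hvR⟩ := intermediate_value_Icc hu.2
    (hcont.mono (Set.Icc_subset_Icc_left (hs.1.trans hu.1))) ⟨hlt.le, hR⟩
  simp only at hvR
  have hvs : v ≤ s := hmax ⟨⟨hs.1.trans (hu.1.trans hv.1), hv.2⟩, hvR.le⟩
  have : u = v := le_antisymm hv.1 (hvs.trans hu.1)
  rw [this, hvR] at hlt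
  exact lt_irrefl _ hlt

/-- A connected set on which `E^k + P` is bounded, lying outside a large disc but meeting its
boundary, is contained in a disc whose radius does not depend on the set. -/
lemma exists_norm_bound (k : ℕ) (hk : 2 ≤ k) (P : Polynomial ℂ) (hP : 1 ≤ P.natDegree)
    (M R₀ : ℝ) : ∃ R N : ℝ, R₀ ≤ R ∧ ∀ S : Set ℂ, IsPreconnected S →
      (∀ z ∈ S, R ≤ ‖z‖ ∧ ‖Complex.exp^[k] z + P.eval z‖ ≤ M) →
      (∃ z ∈ S, ‖z‖ ≤ R) → ∀ z ∈ S, ‖z‖ < N := by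
  obtain ⟨m, rfl⟩ : ∃ m, k = m + 2 := ⟨k - 2, by omega⟩
  obtain ⟨R₁, hR₁, happ⟩ := poly_approx P hP M (Real.exp^[m + 2] 1)
  have ha0 : P.leadingCoeff ≠ 0 := by
    intro h
    rw [Polynomial.leadingCoeff_eq_zero] at h
    simp [h] at hP
  set a := P.leadingCoeff with ha
  set d := P.natDegree with hd
  have hapos : 0 < ‖a‖ := norm_pos_iff.2 ha0
  set R := max R₀ R₁ with hR
  have hRR : R₁ ≤ R := le_max_right _ _
  set C : ℝ := Real.exp^[m + 2] R + Real.pi + d * Real.pi + 2 with hC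
  have hE0 : 0 ≤ Real.exp^[m + 2] R := by
    rw [Function.iterate_succ_apply']; exact (Real.exp_pos _).le
  have hpi := Real.pi_pos
  have hdpi : 0 ≤ d * Real.pi := by positivity
  have hC2 : 2 ≤ C := by linarith
  set A : ℝ := |Real.log (2 * ‖a‖)| with hA
  have hA0 : 0 ≤ A := abs_nonneg _
  -- chosen so that `x ^ 2 / 2 > A + C + d * (x + C)` for all `x ≥ D`
  set D : ℝ := 2 * (d + C + A + d * C) + 2 with hD
  refine ⟨R, D + C, le_max_left _ _, fun S hS hSR hS0 z hz => ?_⟩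
  obtain ⟨z₀, hz₀, hz₀R⟩ := hS0
  have happ' := fun z (hz : z ∈ S) =>
    happ z (hRR.trans (hSR z hz).1) (Complex.exp^[m + 2] z) (hSR z hz).2
  have hpos : ∀ z ∈ S, ∀ j < m + 2, 0 < (Complex.exp^[j] z).re := by
    intro z hz
    apply re_iterate_exp_pos
    obtain ⟨h1, h2⟩ := happ' z hz
    have h3 := norm_sub_norm_le (a * z ^ d) (-(Complex.exp^[m + 2] z))
    rw [sub_neg_eq_add, norm_neg, add_comm (a * z ^ d), norm_mul, norm_pow] at h3
    linarith
  have hcontE : ∀ j : ℕ, Continuous (Complex.exp^[j]) := fun j => Complex.continuous_exp.iterate j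
  have him : ∀ z ∈ S, ∀ j ≤ m + 1, |(Complex.exp^[j] z).im| ≤ C := by
    intro z hz j hj
    have hb : |(Complex.exp^[j] z₀).im| ≤ Real.exp^[m + 2] R :=
      (Complex.abs_im_le_norm _).trans (norm_iterate_exp_le z₀ hz₀R j _ (by omega))
    have hdiff : |(Complex.exp^[j] z).im - (Complex.exp^[j] z₀).im| ≤ Real.pi + d * Real.pi := by
      rcases Nat.lt_or_eq_of_le hj with hj | rfl
      · have := abs_im_sub_lt_pi hS (hcontE j).continuousOn (fun w hw => by
          rw [← Function.iterate_succ_apply' Complex.exp]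
          exact hpos w hw (j + 1) (by omega)) hz hz₀
        linarith
      · have hre0 : ∀ w ∈ S, 0 < w.re := fun w hw => hpos w hw 0 (by omega)
        -- `exp` of this function is `E^k w / (-a w ^ d)`, which is within `1 / 2` of `1`
        set g : ℂ → ℂ := fun w => Complex.exp^[m + 1] w - d * Complex.log w - Complex.log (-a)
          with hg
        have hgc : ContinuousOn g S := by
          refine ((hcontE _).continuousOn.sub (continuousOn_const.mul ?_)).sub continuousOn_const
          exact continuousOn_id.clog fun w hw => Or.inl (hre0 w hw)
        have hgre : ∀ w ∈ S, 0 < (Complex.exp (g w)).re := by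
          intro w hw
          have hw0 : w ≠ 0 := by
            rintro rfl
            simpa using hre0 0 hw
          have hq : a * w ^ d ≠ 0 := mul_ne_zero ha0 (pow_ne_zero _ hw0)
          have he : Complex.exp (g w) = 1 - (Complex.exp^[m + 2] w + a * w ^ d) / (a * w ^ d) := by
            simp only [hg]
            rw [Complex.exp_sub, Complex.exp_sub, Complex.exp_log (neg_ne_zero.2 ha0),
              Complex.exp_nat_mul, Complex.exp_log hw0, ← Function.iterate_succ_apply' Complex.exp]
            field_simp
            ring
          have hn : ‖(Complex.exp^[m + 2] w + a * w ^ d) / (a * w ^ d)‖ ≤ 1 / 2 := by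
            rw [norm_div, div_le_iff₀ (norm_pos_iff.2 hq), norm_mul, norm_pow]
            linarith [(happ' w hw).1]
          rw [he, Complex.sub_re, Complex.one_re]
          linarith [Complex.re_le_norm ((Complex.exp^[m + 2] w + a * w ^ d) / (a * w ^ d))]
        have h1 := abs_im_sub_lt_pi hS hgc hgre hz hz₀
        have harg : ∀ w ∈ S, |d * Complex.arg w| ≤ d * (Real.pi / 2) := by
          intro w hw
          rw [abs_mul, Nat.abs_cast]
          exact mul_le_mul_of_nonneg_left
            (Complex.abs_arg_le_pi_div_two_iff.2 (hre0 w hw).le) (Nat.cast_nonneg _)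
        have hgi : ∀ w, (g w).im
            = (Complex.exp^[m + 1] w).im - d * Complex.arg w - (Complex.log (-a)).im := by
          intro w
          simp [hg, Complex.log_im]
        rw [hgi, hgi, abs_lt] at h1
        have h2 := abs_le.1 (harg z hz)
        have h3 := abs_le.1 (harg z₀ hz₀)
        rw [abs_le]
        constructor <;> linarith [h1.1, h1.2, h2.1, h2.2, h3.1, h3.2]
    have h1 := abs_le.1 hb
    have h2 := abs_le.1 hdiff
    rw [abs_le]
    constructor <;> linarith [h1.1, h1.2, h2.1, h2.2]
  by_contra! hN
  have hx0 : 0 < z.re := hpos z hz 0 (by omega)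
  have hnz : ‖z‖ ≤ z.re + C := by
    have h1 := Complex.norm_le_abs_re_add_abs_im z
    rw [abs_of_pos hx0] at h1
    have h2 : |z.im| ≤ C := him z hz 0 (by omega)
    linarith
  have hd0 : (0:ℝ) ≤ d := Nat.cast_nonneg _
  have hdC : 0 ≤ d * C := by positivity
  have hxD : D ≤ z.re := by linarith
  have hlow := exp_re_le_re_iterate z m C hC2 (by linarith)
    (fun j hj => hpos z hz j (by omega)) (him z hz)
  have hup : (Complex.exp^[m + 1] z).re ≤ A + d * (z.re + C) := by
    rw [← Real.exp_le_exp, ← norm_iterate_succ, Real.exp_add, Real.exp_nat_mul]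
    have h1 : ‖Complex.exp^[m + 2] z‖ ≤ (2 * ‖a‖) * ‖z‖ ^ d := by
      have h3 := norm_sub_norm_le (Complex.exp^[m + 2] z) (-(a * z ^ d))
      rw [sub_neg_eq_add, norm_neg, norm_mul, norm_pow] at h3
      have := (happ' z hz).1
      have : 0 ≤ ‖a‖ * ‖z‖ ^ d := by positivity
      linarith
    refine h1.trans ?_
    have h4 : 2 * ‖a‖ ≤ Real.exp A := by
      rw [← Real.log_le_iff_le_exp (by positivity)]
      exact le_abs_self _
    have h5 : ‖z‖ ≤ Real.exp (z.re + C) := by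
      linarith [Real.add_one_le_exp (z.re + C)]
    gcongr
  have hq := Real.quadratic_le_exp_of_nonneg hx0.le
  nlinarith [mul_le_mul_of_nonneg_right hxD hx0.le, mul_nonneg hA0 hx0.le, mul_nonneg hdC hx0.le]

theorem iterated_exp_add_poly_unbounded_on_unbounded_curve
    (k : ℕ) (hk : 2 ≤ k)
    (P : Polynomial ℂ) (hP : 1 ≤ P.natDegree)
    (f : ℂ → ℂ) (hf : ∀ z, f z = Complex.exp^[k] z + P.eval z)
    (γ : ℝ → ℂ) (hγ : ContinuousOn γ (Set.Ici 0))
    (hub : ¬ Bornology.IsBounded (γ '' Set.Ici 0)) :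
    ¬ Bornology.IsBounded ((f ∘ γ) '' Set.Ici 0) := by
  intro hb
  obtain ⟨M, hM⟩ := hb.exists_norm_le
  obtain ⟨R, N, hR, hRN⟩ := exists_norm_bound k hk P hP M ‖γ 0‖
  apply hub
  rw [isBounded_iff_forall_norm_le]
  refine ⟨max R N, ?_⟩
  rintro _ ⟨t, ht, rfl⟩
  by_contra! hlt
  obtain ⟨hlR, hlN⟩ := max_lt_iff.1 hlt
  obtain ⟨s, hs, hsR, hsu⟩ := exists_last_visit γ hγ R t ht hR hlR.le
  refine (hRN (γ '' Set.Icc s t) ?_ ?_ ⟨γ s, ⟨s, ⟨le_rfl, hs.2⟩, rfl⟩, hsR⟩ (γ t)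
    ⟨t, ⟨hs.2, le_rfl⟩, rfl⟩).not_gt hlN
  · exact isPreconnected_Icc.image _ (hγ.mono fun u hu => hs.1.trans hu.1)
  · rintro _ ⟨u, hu, rfl⟩
    refine ⟨hsu u hu, ?_⟩
    rw [← hf]
    exact hM _ ⟨u, hs.1.trans hu.1, rfl⟩
end

section
/- Let P be a polynomial over ℂ of degree d ≥ 1 whose derivative P' has no zero in the right half-plane {z ∈ ℂ : Re(z) > 0}. Then P is injective on the open sector {z ∈ ℂ : z ≠ 0 and −π/d < Arg(z) < π/d}, where Arg denotes the principal argument. -/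
/-!
Grace's apolarity argument. Suppose `P z = P w` with `z ≠ w` in the sector, and put `n = d - 1`.
The polynomial `(X - w)^d - (X - z)^d` has degree `n`, and its roots `r` satisfy
`r - w = exp (2πik/d) (r - z)` for some `0 < k < d`. Solving for `r` shows that
`2 sin (πk/d) Re r = Im (z exp (πik/d)) - Im (w exp (-πik/d))`, and the two terms on the right are
respectively positive and negative exactly because of the opening angle of the sector; so all
the roots have positive real part (`re_pos_of_pow_eq_pow`).

By Laguerre's theorem for the half-plane (`eval_polarDeriv_ne_zero`, `natDegree_polarDeriv`),
the polar derivative with a pole `ζ`, `Re ζ > 0`, of a polynomial without zeros in the right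
half-plane again has no zeros there and has degree exactly one less. Taking polar derivatives of
`P'` successively at the `n` roots thus yields a nonzero constant (`coeff_polar_ne_zero`).
On the other hand this constant depends linearly on `P`, and for `P = (X - a)^d` it is a fixed
multiple of `(z - a)^d - (w - a)^d`, since both are multiples of the product of the `r - a`. The
powers `(X - a)^d` span the polynomials of degree at most `d` (`eq_of_eq_pow`), so the constant is
a multiple of `P z - P w`, which is zero: a contradiction.
-/

open Polynomial

/-- The polar derivative `n f + (ζ - X) f'` of `f`, regarded as a polynomial of degree `n`,
with pole `ζ`. -/
noncomputable def polarDeriv (n : ℕ) (ζ : ℂ) : ℂ[X] →ₗ[ℂ] ℂ[X] :=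
  (n : ℂ) • LinearMap.id + LinearMap.mulLeft ℂ (C ζ - X) ∘ₗ derivative

lemma polarDeriv_apply (n : ℕ) (ζ : ℂ) (f : ℂ[X]) :
    polarDeriv n ζ f = (n : ℂ) • f + (C ζ - X) * derivative f := rfl

/-- The iterated polar derivative of `f`, regarded as a polynomial of degree `l.length`, with the
entries of `l` as successive poles. -/
noncomputable def polar : List ℂ → ℂ[X] →ₗ[ℂ] ℂ[X]
  | [] => LinearMap.id
  | ζ :: l => polar l ∘ₗ polarDeriv (l.length + 1) ζ

lemma coeff_polarDeriv (n : ℕ) (ζ : ℂ) (f : ℂ[X]) (k : ℕ) :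
    (polarDeriv n ζ f).coeff k =
      n * f.coeff k + ζ * (f.coeff (k + 1) * (k + 1)) - k * f.coeff k := by
  rw [polarDeriv_apply]
  cases k with
  | zero => simp [sub_mul, coeff_derivative]
  | succ k =>
    simp [sub_mul, coeff_derivative]
    ring

/-- Convexity of the disc `a |v|² ≤ Re v`, summed over a multiset of its points and expressed by
the supporting linear inequality at an arbitrary point `p`. -/
lemma sum_disc (a : ℝ) (ha : 0 < a) (p : ℂ) (s : Multiset ℂ)
    (hs : ∀ v ∈ s, a * (v.re ^ 2 + v.im ^ 2) ≤ v.re) :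
    a * (2 * (s.sum.re * p.re + s.sum.im * p.im) - s.card * (p.re ^ 2 + p.im ^ 2))
      ≤ s.sum.re := by
  induction s using Multiset.induction with
  | empty => simp
  | cons v s ih =>
    have h1 := ih fun u hu => hs u (Multiset.mem_cons_of_mem hu)
    have h2 := hs v (Multiset.mem_cons_self v s)
    have h3 : 0 ≤ a * ((v.re - p.re) ^ 2 + (v.im - p.im) ^ 2) := by positivity
    simp only [Multiset.sum_cons, Multiset.card_cons, Complex.add_re, Complex.add_im]
    push_cast
    linarith

/-- Laguerre's theorem for the right half-plane. -/
lemma eval_polarDeriv_ne_zero (f : ℂ[X]) (n : ℕ) (hn : f.natDegree = n + 1)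
    (hf : ∀ z : ℂ, 0 < z.re → f.eval z ≠ 0) (ζ : ℂ) (hζ : 0 < ζ.re) (x : ℂ) (hx : 0 < x.re) :
    (polarDeriv (n + 1) ζ f).eval x ≠ 0 := by
  intro h
  have hsp : f.Splits := IsAlgClosed.splits f
  have hf0 : f.eval x ≠ 0 := hf x hx
  have hfn : f ≠ 0 := by rintro rfl; simp at hf0
  have hsum := hsp.eval_derivative_div_eval_of_ne_zero hf0
  have hcard := hsp.natDegree_eq_card_roots
  set s := f.roots.map fun z => 1 / (x - z) with hs
  have hroot : ∀ r ∈ f.roots, r.re ≤ 0 := by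
    intro r hr
    by_contra! hc
    exact hf r hc ((mem_roots hfn).1 hr)
  have hdisc : ∀ v ∈ s, x.re * (v.re ^ 2 + v.im ^ 2) ≤ v.re := by
    intro v hv
    obtain ⟨r, hr, rfl⟩ := Multiset.mem_map.1 hv
    have h1 := hroot r hr
    have hpos : 0 < (x - r).re := by simp; linarith
    have hN : 0 < Complex.normSq (x - r) := by
      rw [Complex.normSq_pos]
      intro h0
      simp [h0] at hpos
    have h2 : (1 / (x - r)).re ^ 2 + (1 / (x - r)).im ^ 2 = 1 / Complex.normSq (x - r) := by
      rw [one_div (Complex.normSq _), ← map_inv₀, Complex.normSq_apply, one_div]; ring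
    rw [h2, one_div (x - r), Complex.inv_re, mul_one_div]
    refine div_le_div_of_nonneg_right ?_ hN.le
    rw [Complex.sub_re]; linarith
  have hS : ((n : ℂ) + 1) = (x - ζ) * s.sum := by
    rw [← hsum]
    rw [polarDeriv_apply] at h
    simp at h
    field_simp
    linear_combination h
  have hn0 : (n : ℂ) + 1 ≠ 0 := by exact_mod_cast n.succ_ne_zero
  have hu : x - ζ ≠ 0 := by
    intro h0
    rw [h0, zero_mul] at hS
    exact hn0 hS
  -- The mean of the points of `s` is `p = 1 / (x - ζ)`, which therefore lies in the disc.
  set p := (x - ζ)⁻¹ with hp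
  have hSp : s.sum = ((n : ℝ) + 1 : ℝ) * p := by
    rw [hp]; push_cast; rw [hS]; field_simp
  have key := sum_disc x.re hx p s hdisc
  have hc : (s.card : ℝ) = n + 1 := by
    rw [hs, Multiset.card_map, ← hcard, hn]; push_cast; ring
  rw [hc, hSp, Complex.re_ofReal_mul, Complex.im_ofReal_mul] at key
  have hnp : (0 : ℝ) < n + 1 := by positivity
  have key2 : x.re * (p.re ^ 2 + p.im ^ 2) ≤ p.re := by
    refine le_of_mul_le_mul_left ?_ hnp
    linarith
  have hN : 0 < Complex.normSq (x - ζ) := Complex.normSq_pos.2 hu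
  have h2 : p.re ^ 2 + p.im ^ 2 = (Complex.normSq (x - ζ))⁻¹ := by
    rw [← map_inv₀, ← hp, Complex.normSq_apply]; ring
  rw [h2, hp, Complex.inv_re, div_eq_mul_inv] at key2
  have := le_of_mul_le_mul_right key2 (inv_pos.2 hN)
  simp at this
  linarith

/-- The degree drops by exactly one, because a pole in the right half-plane is not the centroid
of the roots. -/
lemma natDegree_polarDeriv (f : ℂ[X]) (n : ℕ) (hn : f.natDegree = n + 1)
    (hf : ∀ z : ℂ, 0 < z.re → f.eval z ≠ 0) (ζ : ℂ) (hζ : 0 < ζ.re) :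
    (polarDeriv (n + 1) ζ f).natDegree = n := by
  have hsp : f.Splits := IsAlgClosed.splits f
  have hfn : f ≠ 0 := by rintro rfl; simp at hn
  apply natDegree_eq_of_le_of_coeff_ne_zero
  · rw [natDegree_le_iff_coeff_eq_zero]
    intro k hk
    rw [coeff_polarDeriv, coeff_eq_zero_of_natDegree_lt (show f.natDegree < k + 1 by omega)]
    rcases (show k = n + 1 ∨ f.natDegree < k by omega) with rfl | h
    · ring
    · rw [coeff_eq_zero_of_natDegree_lt h]; ring
  · have hnext := hsp.nextCoeff_eq_neg_sum_roots_mul_leadingCoeff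
    rw [nextCoeff_of_natDegree_pos (by omega), hn, Nat.add_sub_cancel, leadingCoeff, hn] at hnext
    have hlc : f.coeff (n + 1) ≠ 0 := by
      rw [← hn]; exact leadingCoeff_ne_zero.2 hfn
    rw [coeff_polarDeriv, hnext]
    have hre : f.roots.sum.re ≤ 0 := by
      rw [← Complex.coe_reAddGroupHom, map_multiset_sum]
      refine (Multiset.sum_le_card_nsmul _ 0 fun y hy => ?_).trans (by simp)
      obtain ⟨r, hr, rfl⟩ := Multiset.mem_map.1 hy
      by_contra! hc
      exact hf r hc ((mem_roots hfn).1 hr)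
    have h2 : ζ * ((n : ℝ) + 1 : ℝ) - f.roots.sum ≠ 0 := by
      intro h0
      have := congrArg Complex.re h0
      rw [Complex.sub_re, Complex.re_mul_ofReal, Complex.zero_re] at this
      have : 0 < ζ.re * ((n : ℝ) + 1) := by positivity
      linarith
    intro h0
    refine mul_ne_zero hlc h2 ?_
    push_cast at h0 ⊢
    linear_combination h0

lemma coeff_polar_ne_zero (l : List ℂ) (hl : ∀ ζ ∈ l, 0 < ζ.re) (f : ℂ[X])
    (hn : f.natDegree = l.length) (hf : ∀ z : ℂ, 0 < z.re → f.eval z ≠ 0) :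
    (polar l f).coeff 0 ≠ 0 := by
  induction l generalizing f with
  | nil =>
    have h := hf 1 (by simp)
    rw [eq_C_of_natDegree_eq_zero hn] at h
    simpa [polar] using h
  | cons ζ l ih =>
    have hζ := hl ζ (by simp)
    exact ih (fun r hr => hl r (by simp [hr])) _ (natDegree_polarDeriv f _ hn hf ζ hζ)
      (eval_polarDeriv_ne_zero f _ hn hf ζ hζ)

lemma polarDeriv_pow (n : ℕ) (ζ a : ℂ) :
    polarDeriv (n + 1) ζ ((X - C a) ^ (n + 1)) = (((n : ℂ) + 1) * (ζ - a)) • (X - C a) ^ n := by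
  rw [polarDeriv_apply, derivative_X_sub_C_pow]
  simp only [smul_eq_C_mul, C_mul, C_sub, C_add, Nat.add_sub_cancel]
  push_cast
  simp only [C_add, C_1, map_natCast]
  ring

lemma polar_pow (l : List ℂ) (a : ℂ) :
    polar l ((X - C a) ^ l.length) =
      C ((l.length.factorial : ℂ) * (l.map (· - a)).prod) := by
  induction l with
  | nil => simp [polar]
  | cons ζ l ih =>
    rw [polar, LinearMap.comp_apply, List.length_cons, polarDeriv_pow, map_smul, ih,
      smul_eq_C_mul, ← C_mul, List.map_cons, List.prod_cons, Nat.factorial_succ]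
    congr 1
    push_cast
    ring

lemma coeff_X_sub_C_pow' (a : ℂ) (n k : ℕ) :
    ((X - C a) ^ n).coeff k = (-a) ^ (n - k) * (n.choose k : ℂ) := by
  rw [sub_eq_add_neg, ← C_neg, coeff_X_add_C_pow]

/-- The powers `(X - a)^d` span the polynomials of degree at most `d`: the value of a functional
on `(X - a)^d` is a polynomial in `a`, whose coefficients are its values on the monomials up to
nonzero factors. -/
lemma eq_of_eq_pow (d : ℕ) (L M : ℂ[X] →ₗ[ℂ] ℂ)
    (h : ∀ a : ℂ, L ((X - C a) ^ d) = M ((X - C a) ^ d)) (f : ℂ[X]) (hf : f.natDegree ≤ d) :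
    L f = M f := by
  have h' : ∀ a : ℂ, (L - M) ((X + C a) ^ d) = 0 := by
    intro a
    have := h (-a)
    simp only [C_neg, sub_neg_eq_add] at this
    simp [this]
  rw [← sub_eq_zero, ← LinearMap.sub_apply]
  generalize L - M = K at h'
  have hG : ∑ k ∈ Finset.range (d + 1),
      monomial (d - k) ((d.choose k : ℂ) * K (X ^ k)) = (0 : ℂ[X]) := by
    refine Polynomial.funext fun a => ?_
    rw [eval_zero, ← h' a, add_pow, map_sum, eval_finsetSum]
    refine Finset.sum_congr rfl fun k _ => ?_
    have : (X : ℂ[X]) ^ k * C a ^ (d - k) * (d.choose k : ℂ[X])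
        = (a ^ (d - k) * (d.choose k : ℂ)) • X ^ k := by
      rw [smul_eq_C_mul, C_mul, C_pow, map_natCast]; ring
    rw [this, map_smul, eval_monomial, smul_eq_mul]
    ring
  have hK : ∀ k ≤ d, K (X ^ k) = 0 := by
    intro k hk
    have h1 := congrArg (fun q => coeff q (d - k)) hG
    simp only [finsetSum_coeff, coeff_monomial, coeff_zero] at h1
    rw [Finset.sum_eq_single k] at h1
    · simp only [if_true] at h1
      have : (d.choose k : ℂ) ≠ 0 := by exact_mod_cast (Nat.choose_pos hk).ne'
      exact (mul_eq_zero.1 h1).resolve_left this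
    · intro j hj hjk
      have := Finset.mem_range.1 hj
      rw [if_neg (by omega)]
    · intro hk'
      exact absurd (Finset.mem_range.2 (by omega)) hk'
  rw [f.as_sum_range' (d + 1) (by omega), map_sum]
  refine Finset.sum_eq_zero fun k hk => ?_
  rw [← C_mul_X_pow_eq_monomial, ← smul_eq_C_mul, map_smul,
    hK k (by have := Finset.mem_range.1 hk; omega), smul_zero]

lemma re_pos_of_pow_eq_pow (d : ℕ) (hd : 1 ≤ d) (z w r : ℂ) (hzw : z ≠ w)
    (hz : z ≠ 0 ∧ -(Real.pi / d) < z.arg ∧ z.arg < Real.pi / d)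
    (hw : w ≠ 0 ∧ -(Real.pi / d) < w.arg ∧ w.arg < Real.pi / d)
    (hr : (r - w) ^ d = (r - z) ^ d) : 0 < r.re := by
  have hd0 : d ≠ 0 := by omega
  have : NeZero d := ⟨hd0⟩
  have hrz : r - z ≠ 0 := by
    intro h0
    rw [h0, zero_pow hd0] at hr
    have := pow_eq_zero_iff hd0 |>.1 hr
    exact hzw (by linear_combination this - h0)
  have hω : ((r - w) / (r - z)) ^ d = 1 := by
    rw [div_pow, hr, div_self (pow_ne_zero _ hrz)]
  obtain ⟨k, hk, hE⟩ := (Complex.isPrimitiveRoot_exp d hd0).eq_pow_of_pow_eq_one hω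
  set φ : ℝ := Real.pi * k / d with hφ
  have hdR : (0 : ℝ) < d := by exact_mod_cast hd
  have hdC : (d : ℂ) ≠ 0 := by exact_mod_cast hd0
  have hE2 : Complex.exp (φ * Complex.I) * Complex.exp (φ * Complex.I) * (r - z) = r - w := by
    rw [eq_div_iff hrz, ← Complex.exp_nat_mul] at hE
    rw [← hE, ← Complex.exp_add]
    congr 2
    rw [hφ]; push_cast; field_simp; ring
  have hk0 : k ≠ 0 := by
    rintro rfl
    simp [hφ] at hE2
    exact hzw hE2
  have hpd : 0 < Real.pi / d := div_pos Real.pi_pos hdR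
  have hφ1 : Real.pi / d ≤ φ := by
    have : (1 : ℝ) ≤ k := by exact_mod_cast Nat.one_le_iff_ne_zero.2 hk0
    rw [hφ]; gcongr; nlinarith [Real.pi_pos]
  have hφ2 : φ ≤ Real.pi - Real.pi / d := by
    have : (k : ℝ) + 1 ≤ d := by exact_mod_cast hk
    rw [hφ, le_sub_iff_add_le, ← add_div, div_le_iff₀ hdR]
    nlinarith [Real.pi_pos]
  have hsin : 0 < Real.sin φ := Real.sin_pos_of_pos_of_lt_pi (by linarith) (by linarith)
  have h1 : 0 < Real.sin (φ + z.arg) :=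
    Real.sin_pos_of_pos_of_lt_pi (by linarith) (by linarith)
  have h2 : 0 < Real.sin (φ - w.arg) :=
    Real.sin_pos_of_pos_of_lt_pi (by linarith) (by linarith)
  have h1' := mul_pos (norm_pos_iff.2 hz.1) h1
  have h2' := mul_pos (norm_pos_iff.2 hw.1) h2
  rw [Real.sin_add] at h1'
  rw [Real.sin_sub] at h2'
  have hzr := Complex.norm_mul_cos_arg z
  have hzi := Complex.norm_mul_sin_arg z
  have hwr := Complex.norm_mul_cos_arg w
  have hwi := Complex.norm_mul_sin_arg w
  -- Multiplying by the conjugate of `exp (iφ)` makes the relation symmetric in `z` and `w`.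
  have hE3 : Complex.exp (φ * Complex.I) * (r - z) = Complex.exp (-φ * Complex.I) * (r - w) := by
    rw [← hE2, ← mul_assoc, ← mul_assoc, ← Complex.exp_add]
    simp
  have him := congrArg Complex.im hE3
  rw [Complex.exp_mul_I, Complex.exp_mul_I, Complex.cos_neg, Complex.sin_neg,
    ← Complex.ofReal_cos, ← Complex.ofReal_sin] at him
  simp [-Complex.ofReal_cos, -Complex.ofReal_sin] at him
  have e1 : ‖z‖ * (Real.sin φ * Real.cos z.arg + Real.cos φ * Real.sin z.arg)
      = Real.sin φ * z.re + Real.cos φ * z.im := by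
    linear_combination Real.sin φ * hzr + Real.cos φ * hzi
  have e2 : ‖w‖ * (Real.sin φ * Real.cos w.arg - Real.cos φ * Real.sin w.arg)
      = Real.sin φ * w.re - Real.cos φ * w.im := by
    linear_combination Real.sin φ * hwr - Real.cos φ * hwi
  rw [e1] at h1'
  rw [e2] at h2'
  have : 0 < Real.sin φ * r.re := by linarith
  exact (mul_pos_iff_of_pos_left hsin).1 this

/-- If a polynomial `P` of degree `d ≥ 1` has no critical point in the right half-plane,
then `P` is injective on the sector `{z ≠ 0 : -π/d < Arg z < π/d}`. -/
theorem poly_injective_on_sector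
    (P : Polynomial ℂ) (hP : 1 ≤ P.natDegree)
    (hcrit : ∀ z : ℂ, 0 < z.re → (Polynomial.derivative P).eval z ≠ 0) :
    Set.InjOn P.eval
      {z : ℂ | z ≠ 0 ∧ -(Real.pi / P.natDegree) < z.arg ∧ z.arg < Real.pi / P.natDegree} := by
  intro z hz w hw hPzw
  by_contra hzw
  obtain ⟨n, hn⟩ : ∃ n, P.natDegree = n + 1 := ⟨P.natDegree - 1, by omega⟩
  rw [hn] at hz hw
  set Q : ℂ[X] := (X - C w) ^ (n + 1) - (X - C z) ^ (n + 1) with hQ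
  have hcoeff : Q.coeff n = (n + 1) * (z - w) := by
    rw [hQ, coeff_sub, coeff_X_sub_C_pow', coeff_X_sub_C_pow']
    simp
    ring
  have hcoeff0 : Q.coeff n ≠ 0 := by
    rw [hcoeff]
    exact mul_ne_zero (by exact_mod_cast n.succ_ne_zero) (sub_ne_zero.2 hzw)
  have hQdeg : Q.natDegree = n := by
    refine natDegree_eq_of_le_of_coeff_ne_zero ?_ hcoeff0
    rw [natDegree_le_iff_coeff_eq_zero]
    intro k hk
    rw [hQ, coeff_sub, coeff_X_sub_C_pow', coeff_X_sub_C_pow']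
    rcases (show k = n + 1 ∨ n + 1 < k by omega) with rfl | h
    · simp
    · simp [Nat.choose_eq_zero_of_lt h]
  have hQ0 : Q ≠ 0 := by
    intro h
    simp [h] at hcoeff0
  have hsp : Q.Splits := IsAlgClosed.splits Q
  set l := Q.roots.toList with hl
  have hlen : l.length = n := by
    rw [hl, Multiset.length_toList, ← hsp.natDegree_eq_card_roots, hQdeg]
  have hlpos : ∀ r ∈ l, 0 < r.re := by
    intro r hr
    have hroot : Q.eval r = 0 := (mem_roots hQ0).1 (Multiset.mem_toList.1 hr)
    simp [hQ] at hroot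
    exact re_pos_of_pow_eq_pow (n + 1) (by omega) z w r hzw hz hw (sub_eq_zero.1 hroot)
  have hprod : ∀ a : ℂ, Q.leadingCoeff * (l.map (· - a)).prod
      = (z - a) ^ (n + 1) - (w - a) ^ (n + 1) := by
    intro a
    have h1 := hsp.eval_eq_prod_roots a
    have h2 : (l.map (· - a)).prod = (-1) ^ n * (Q.roots.map (a - ·)).prod := by
      have h3 : (l.map (· - a)).prod = (Q.roots.map (· - a)).prod := by
        rw [← Multiset.prod_coe, ← Multiset.map_coe, hl, Multiset.coe_toList]
      have h4 : (Q.roots.map (· - a)) = (Q.roots.map (a - ·)).map Neg.neg := by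
        rw [Multiset.map_map]; simp
      rw [h3, h4, Multiset.prod_map_neg, Multiset.card_map, ← hsp.natDegree_eq_card_roots, hQdeg]
    rw [h2, mul_left_comm, ← h1, hQ]
    simp only [eval_sub, eval_pow, eval_X, eval_C]
    rw [← neg_sub z a, ← neg_sub w a, neg_pow (z - a), neg_pow (w - a)]
    have : ((-1 : ℂ) ^ n) * (-1) ^ n = 1 := by rw [← mul_pow]; simp
    rw [pow_succ (-1 : ℂ) n]
    linear_combination ((z - a) ^ (n + 1) - (w - a) ^ (n + 1)) * this
  -- The two functionals to be compared: the final polar derivative of `P'`, and `P z - P w`.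
  let L : ℂ[X] →ₗ[ℂ] ℂ := Q.leadingCoeff • (lcoeff ℂ 0 ∘ₗ polar l ∘ₗ derivative)
  let M : ℂ[X] →ₗ[ℂ] ℂ := ((n + 1).factorial : ℂ) • (leval z - leval w)
  have hLM : L P = M P := by
    refine eq_of_eq_pow (n + 1) L M (fun a => ?_) P hn.le
    have hpol := polar_pow l a
    rw [hlen] at hpol
    have hder : derivative ((X - C a) ^ (n + 1)) = ((n : ℂ) + 1) • (X - C a) ^ n := by
      rw [derivative_X_sub_C_pow, smul_eq_C_mul]; simp
    have hL : L ((X - C a) ^ (n + 1))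
        = Q.leadingCoeff * (((n : ℂ) + 1) * (n.factorial * (l.map (· - a)).prod)) := by
      change Q.leadingCoeff * (polar l (derivative ((X - C a) ^ (n + 1)))).coeff 0 = _
      rw [hder, map_smul, hpol, coeff_smul, coeff_C_zero, smul_eq_mul]
    have hM : M ((X - C a) ^ (n + 1))
        = (n + 1).factorial * ((z - a) ^ (n + 1) - (w - a) ^ (n + 1)) := by
      simp [M, leval]
    rw [hL, hM, ← hprod a, Nat.factorial_succ]
    push_cast
    ring
  have hM0 : M P = 0 := by
    change ((n + 1).factorial : ℂ) * (P.eval z - P.eval w) = 0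
    rw [show P.eval z = P.eval w from hPzw, sub_self, mul_zero]
  have hL0 : L P ≠ 0 := by
    refine mul_ne_zero (leadingCoeff_ne_zero.2 hQ0) ?_
    refine coeff_polar_ne_zero l hlpos _ ?_ hcrit
    rw [natDegree_derivative, hn, hlen, Nat.add_sub_cancel]
  exact hL0 (hLM.trans hM0)
end

section
/- Let λ be a real number with 0 < λ < 2, and define h_λ : ℝ → ℝ by h_λ(x) = x·exp(λ(x+1)). Then for every real x with −1 < x < 0, one has h_λ(h_λ(x)) < x. -/
/-!
Put `s = x + 1 ∈ (0, 1)`. Since `h_λ (h_λ x) = x * exp (λ (x + h_λ x + 2))` and `x < 0`, the claim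
says that `x + h_λ x + 2 > 0`, that is, `(1 - s) * exp (λ s) < 1 + s`. As `λ < 2`, this follows from
`(1 - s) * exp (2 s) ≤ 1 + s`, which is the first-term bound `2 s ≤ log (1 + s) - log (1 - s)` of
the power series of `2 artanh s`, all of whose terms are nonnegative.
-/

theorem one_sub_mul_exp_two_mul_le {s : ℝ} (hs0 : 0 < s) (hs1 : s < 1) :
    (1 - s) * Real.exp (2 * s) ≤ 1 + s := by
  have hsum := Real.hasSum_log_sub_log_of_abs_lt_one (abs_lt.2 ⟨by linarith, hs1⟩)
  have hlog : 2 * s ≤ Real.log (1 + s) - Real.log (1 - s) := by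
    have h := sum_le_hasSum {0} (fun k _ => by positivity) hsum
    simpa using h
  have hm : 0 < 1 - s := by linarith
  have hexp := Real.exp_le_exp.2 hlog
  rw [Real.exp_sub, Real.exp_log (by linarith), Real.exp_log hm, le_div_iff₀ hm] at hexp
  linarith

/-- For `0 < λ < 2` and `h_λ x = x * exp (λ (x+1))`, one has `h_λ (h_λ x) < x` for
every `x ∈ (-1, 0)`. -/
theorem h_lambda_second_iterate_lt
    (lam : ℝ) (h0 : 0 < lam) (h2 : lam < 2)
    (x : ℝ) (hx1 : -1 < x) (hx0 : x < 0) :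
    (fun y : ℝ => y * Real.exp (lam * (y + 1)))
      ((fun y : ℝ => y * Real.exp (lam * (y + 1))) x) < x := by
  have hkey := one_sub_mul_exp_two_mul_le (s := x + 1) (by linarith) (by linarith)
  have hlt : Real.exp (lam * (x + 1)) < Real.exp (2 * (x + 1)) :=
    Real.exp_lt_exp.2 (mul_lt_mul_of_pos_right h2 (by linarith))
  have hpos : 0 < x + x * Real.exp (lam * (x + 1)) + 2 := by nlinarith
  have hone : 1 < Real.exp (lam * (x + x * Real.exp (lam * (x + 1)) + 2)) :=
    Real.one_lt_exp_iff.2 (mul_pos h0 hpos)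
  have heq : x * Real.exp (lam * (x + 1)) * Real.exp (lam * (x * Real.exp (lam * (x + 1)) + 1))
      = x * Real.exp (lam * (x + x * Real.exp (lam * (x + 1)) + 2)) := by
    rw [mul_assoc, ← Real.exp_add]
    ring_nf
  change x * Real.exp (lam * (x + 1)) * Real.exp (lam * (x * Real.exp (lam * (x + 1)) + 1)) < x
  rw [heq]
  nlinarith
end

section
/- Let λ be a real number with 0 < λ < 2, and define h_λ : ℝ → ℝ by h_λ(x) = x·exp(λ(x+1)). Then for every real x < 0, the sequence of iterates h_λⁿ(x) converges to −1 as n → ∞; that is, the interval (−∞, 0) is contained in the attracting basin of the attracting fixed point −1 of h_λ. -/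
/-!
The distance to the fixed point is a Lyapunov function: `|h x + 1| < |x + 1|` for every `x < 0`
with `x ≠ -1`, where `h x = x * exp (lam * (x + 1))`. One of the two bounds says that `h` moves
points towards `-1`; the other reduces, after comparing `lam` with `2`, to the inequality
`(1 - t) * exp (2 * t) < 1 + t` for `t > 0` (that is, `tanh t < t`).

The distances `|xₙ + 1|` therefore decrease to some `d ≥ 0`, and the orbit is bounded. If `p ≤ 0`
is a limit point of the orbit, then `p` and `h p` both lie at distance `d` from `-1`, so `p = -1`
and `d = 0` unless `p = 0`. The repelling point `0` is excluded: there `d = 1`, so all `xₙ`, being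
negative and at distance at least `1` from `-1`, satisfy `xₙ ≤ -2`, and so does `p`.
-/

open Filter Topology

lemma one_sub_mul_exp_lt {t : ℝ} (ht : 0 < t) : (1 - t) * Real.exp (2 * t) < 1 + t := by
  have hd : ∀ x : ℝ, HasDerivAt (fun x : ℝ => (1 + x) - (1 - x) * Real.exp (2 * x))
      (1 - (-1 * Real.exp (2 * x) + (1 - x) * (Real.exp (2 * x) * (2 * 1)))) x := fun x =>
    ((hasDerivAt_id x).const_add 1).sub
      (((hasDerivAt_id x).const_sub 1).mul (((hasDerivAt_id x).const_mul 2).exp))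
  have hmono : StrictMonoOn (fun x : ℝ => (1 + x) - (1 - x) * Real.exp (2 * x)) (Set.Ici 0) := by
    refine strictMonoOn_of_deriv_pos (convex_Ici 0)
      (fun x _ => (hd x).continuousAt.continuousWithinAt) fun x hx => ?_
    rw [interior_Ici, Set.mem_Ioi] at hx
    rw [(hd x).deriv]
    -- The derivative is `exp (2 * x) * (exp (-2 * x) - 1 + 2 * x)`.
    have h1 : -(2 * x) + 1 < Real.exp (-(2 * x)) := Real.add_one_lt_exp (by linarith)
    have h2 : Real.exp (-(2 * x)) * Real.exp (2 * x) = 1 := by rw [← Real.exp_add]; simp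
    nlinarith [Real.exp_pos (2 * x)]
  have := hmono Set.self_mem_Ici (Set.mem_Ici.2 ht.le) ht
  simp at this
  linarith

lemma abs_map_add_one_lt {lam : ℝ} (h0 : 0 < lam) (h2 : lam < 2) {x : ℝ} (hx : x < 0)
    (hx1 : x ≠ -1) : |x * Real.exp (lam * (x + 1)) + 1| < |x + 1| := by
  rcases lt_or_gt_of_ne hx1 with h | h
  · rw [abs_of_neg (by linarith : x + 1 < 0), abs_lt]
    have hlt : Real.exp (lam * (x + 1)) < 1 := Real.exp_lt_one_iff.mpr (by nlinarith)
    have hle : Real.exp (2 * (x + 1)) < Real.exp (lam * (x + 1)) :=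
      Real.exp_lt_exp.2 (by nlinarith)
    have hk := one_sub_mul_exp_lt (t := -(x + 1)) (by linarith)
    have he : Real.exp (2 * -(x + 1)) * Real.exp (2 * (x + 1)) = 1 := by
      rw [← Real.exp_add, mul_neg, neg_add_cancel, Real.exp_zero]
    have hk' := mul_lt_mul_of_pos_right hk (Real.exp_pos (2 * (x + 1)))
    rw [mul_assoc, he] at hk'
    constructor <;> nlinarith
  · rw [abs_of_pos (by linarith : 0 < x + 1), abs_lt]
    have hlt : 1 < Real.exp (lam * (x + 1)) := Real.one_lt_exp_iff.2 (by nlinarith)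
    have hle : Real.exp (lam * (x + 1)) < Real.exp (2 * (x + 1)) :=
      Real.exp_lt_exp.2 (by nlinarith)
    have hk := one_sub_mul_exp_lt (t := x + 1) (by linarith)
    constructor <;> nlinarith

/-- For `0 < λ < 2` and `h_λ x = x exp (λ(x+1))`, for every `x < 0` the iterates
`h_λ^[n] x` converge to `-1`; i.e. `(-∞, 0)` is contained in the attracting basin of
the attracting fixed point `-1`. -/
theorem h_lambda_basin_contains_negatives
    (lam : ℝ) (h0 : 0 < lam) (h2 : lam < 2) (x : ℝ) (hx : x < 0) :
    Filter.Tendsto (fun n : ℕ => (fun y : ℝ => y * Real.exp (lam * (y + 1)))^[n] x)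
      Filter.atTop (nhds (-1)) := by
  set h : ℝ → ℝ := fun y => y * Real.exp (lam * (y + 1)) with hh
  have hcont : Continuous h := by fun_prop
  have hsucc : ∀ n, h^[n + 1] x = h (h^[n] x) := fun n => Function.iterate_succ_apply' h n x
  have hneg : ∀ n, h^[n] x < 0 := by
    intro n
    induction n with
    | zero => exact hx
    | succ n ih => rw [hsucc]; exact mul_neg_of_neg_of_pos ih (Real.exp_pos _)
  have hanti : Antitone fun n => |h^[n] x + 1| := by
    refine antitone_nat_of_succ_le fun n => ?_
    rw [hsucc]
    by_cases hn : h^[n] x = -1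
    · rw [hn]; simp [hh]
    · exact (abs_map_add_one_lt h0 h2 (hneg n) hn).le
  have hbdd : BddBelow (Set.range fun n => |h^[n] x + 1|) :=
    ⟨0, by rintro _ ⟨n, rfl⟩; exact abs_nonneg _⟩
  obtain ⟨d, hd⟩ : ∃ d, Tendsto (fun n => |h^[n] x + 1|) atTop (𝓝 d) :=
    ⟨_, tendsto_atTop_ciInf hanti hbdd⟩
  have hdle : ∀ n, d ≤ |h^[n] x + 1| := fun n => hanti.le_of_tendsto hd n
  obtain ⟨p, -, φ, hφ, hp⟩ := (isCompact_closedBall (-1 : ℝ) |x + 1|).tendsto_subseq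
    (x := fun n => h^[n] x) fun n => by
      rw [Metric.mem_closedBall, Real.dist_eq, sub_neg_eq_add]
      exact hanti (Nat.zero_le n)
  have hpd : |p + 1| = d :=
    tendsto_nhds_unique (hp.add_const 1).abs (hd.comp hφ.tendsto_atTop)
  have hhpd : |h p + 1| = d := by
    refine tendsto_nhds_unique (((hcont.tendsto p).comp hp).add_const 1).abs
      ((hd.comp ((tendsto_add_atTop_nat 1).comp hφ.tendsto_atTop)).congr fun n => ?_)
    simp only [Function.comp_apply, hsucc]
  have hp0 : p ≤ 0 := le_of_tendsto' hp fun n => (hneg _).le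
  have hpne : p ≠ 0 := by
    rintro rfl
    have hle : (0 : ℝ) ≤ -2 := le_of_tendsto' hp fun n => by
      have h1 := hdle (φ n)
      rw [← hpd, zero_add, abs_one, le_abs] at h1
      have h3 := hneg (φ n)
      simp only [Function.comp_apply]
      rcases h1 with h1 | h1 <;> linarith
    linarith
  have hp1 : p = -1 := by
    by_contra hne
    have hlt : |h p + 1| < |p + 1| :=
      abs_map_add_one_lt h0 h2 (lt_of_le_of_ne hp0 hpne) hne
    rw [hpd, hhpd] at hlt
    exact lt_irrefl _ hlt
  have hd0 : d = 0 := by rw [← hpd, hp1]; norm_num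
  rw [tendsto_iff_dist_tendsto_zero]
  simpa only [Real.dist_eq, sub_neg_eq_add, hd0] using hd
end
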